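/- Given a rooted tree T with n nodes and a real value p > 1, there exists a set P of at most 2p nodes such that every connected component of T with the nodes of P removed contains fewer than n/p nodes, and each such component is adjacent (in T) to at most two nodes of P. -/

import Mathlib

open Classical in
theorem exists_rec_pair {V : Type*} [Fintype V] (K : V → V → Prop)
    (hwf : WellFounded (fun c v => K v c)) (Q : ℕ × ℕ → Prop) :
    ∃ g b : V → ℕ,
      (∀ v, g v = 1 + ∑ c, if K v c ∧ ¬ Q (g c, b c) then g c else 0) ∧
      (∀ v, b v = ∑ c, if K v c ∧ (Q (g c, b c) ∨ 1 ≤ b c) then 1 else 0) := by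
  let Φ : ∀ v : V, (∀ c : V, K v c → ℕ × ℕ) → ℕ × ℕ := fun v ih =>
    (1 + ∑ c, if h : K v c then (if ¬ Q (ih c h) then (ih c h).1 else 0) else 0,
      ∑ c, if h : K v c then (if Q (ih c h) ∨ 1 ≤ (ih c h).2 then 1 else 0) else 0)
  let f : V → ℕ × ℕ := hwf.fix Φ
  have hf : ∀ v, f v = Φ v (fun c _ => f c) := fun v => hwf.fix_eq Φ v
  refine ⟨fun v => (f v).1, fun v => (f v).2, ?_, ?_⟩
  · intro v
    have := congrArg Prod.fst (hf v)
    simp only [Φ] at this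
    refine this.trans ?_
    congr 1
    refine Finset.sum_congr rfl fun c _ => ?_
    by_cases h : K v c <;> simp [h]
  · intro v
    have := congrArg Prod.snd (hf v)
    simp only [Φ] at this
    refine this.trans ?_
    refine Finset.sum_congr rfl fun c _ => ?_
    by_cases h : K v c <;> simp [h]

open Classical in
theorem sum_children_le {V : Type*} [Fintype V] (K : V → V → Prop)
    (huniq : ∀ a b c, K a c → K b c → a = b) (h : V → ℕ) :
    ∑ v, ∑ c, (if K v c then h c else 0) ≤ ∑ c, h c := by
  rw [Finset.sum_comm]
  refine Finset.sum_le_sum fun c _ => ?_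
  by_cases hc : ∃ a, K a c
  · obtain ⟨a, ha⟩ := hc
    rw [Finset.sum_eq_single a]
    · simp [ha]
    · intro b _ hb
      rw [if_neg]
      intro hbc
      exact hb (huniq _ _ _ hbc ha)
    · simp
  · push Not at hc
    simp [hc]

open Classical in
theorem core {V : Type*} [Fintype V] (K : V → V → Prop)
    (hwf : WellFounded (fun c v => K v c))
    (huniq : ∀ a b c, K a c → K b c → a = b) (t : ℝ) (ht : 0 < t) :
    ∃ P : Finset V, (P.card : ℝ) * t ≤ 2 * Fintype.card V ∧
      ∀ v, v ∉ P →
        ((Set.ncard {u | Relation.ReflTransGen (fun a c => K a c ∧ c ∉ P) v u} : ℝ) < t ∧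
        Set.ncard {x | x ∈ P ∧ ∃ u,
          Relation.ReflTransGen (fun a c => K a c ∧ c ∉ P) v u ∧ K u x} ≤ 1) := by
  obtain ⟨g, b, hg, hb⟩ := exists_rec_pair K hwf (fun q => t ≤ q.1 ∨ 2 ≤ q.2)
  let P : Finset V := Finset.univ.filter fun v => t ≤ g v ∨ 2 ≤ b v
  have hP : ∀ v, v ∈ P ↔ (t ≤ g v ∨ 2 ≤ b v) := fun v => by simp [P]
  simp only [← hP] at hg hb
  have hD : ∀ v, Set.ncard {u | Relation.ReflTransGen (fun a c => K a c ∧ c ∉ P) v u} ≤ g v := by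
    intro v
    induction v using hwf.induction with
    | _ v ih =>
      have hsub : {u | Relation.ReflTransGen (fun a c => K a c ∧ c ∉ P) v u} ⊆
          ({v} : Set V) ∪ ⋃ c ∈ (Finset.univ.filter fun c => K v c ∧ c ∉ P),
            {u | Relation.ReflTransGen (fun a c => K a c ∧ c ∉ P) c u} := by
        intro u hu
        rcases Relation.ReflTransGen.cases_head hu with h | ⟨c, h1, h2⟩
        · left; exact h.symm
        · right
          simp only [Set.mem_iUnion]
          exact ⟨c, by simpa using h1, h2⟩
      refine (Set.ncard_le_ncard hsub (Set.toFinite _)).trans ?_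
      refine (Set.ncard_union_le _ _).trans ?_
      rw [hg v, Set.ncard_singleton, ← Finset.sum_filter]
      refine Nat.add_le_add_left ?_ 1
      refine (Finset.set_ncard_biUnion_le _ _).trans ?_
      refine Finset.sum_le_sum fun c hc => ih c ?_
      exact (Finset.mem_filter.1 hc).2.1
  have hN : ∀ v, Set.ncard {x | x ∈ P ∧ ∃ u,
          Relation.ReflTransGen (fun a c => K a c ∧ c ∉ P) v u ∧ K u x} ≤ b v := by
    intro v
    induction v using hwf.induction with
    | _ v ih =>
      have hsub : {x | x ∈ P ∧ ∃ u,
          Relation.ReflTransGen (fun a c => K a c ∧ c ∉ P) v u ∧ K u x} ⊆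
          ⋃ c ∈ (Finset.univ.filter fun c => K v c),
            (if c ∈ P then {c} else {x | x ∈ P ∧ ∃ u,
          Relation.ReflTransGen (fun a c => K a c ∧ c ∉ P) c u ∧ K u x}) := by
        rintro x ⟨hxP, u, hu, hux⟩
        simp only [Set.mem_iUnion]
        rcases Relation.ReflTransGen.cases_head hu with h | ⟨c, h1, h2⟩
        · subst h
          exact ⟨x, by simpa using hux, by simp [hxP]⟩
        · refine ⟨c, by simpa using h1.1, ?_⟩
          rw [if_neg h1.2]
          exact ⟨hxP, u, h2, hux⟩
      refine (Set.ncard_le_ncard hsub (Set.toFinite _)).trans ?_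
      refine (Finset.set_ncard_biUnion_le _ _).trans ?_
      rw [hb v, Finset.sum_filter]
      refine Finset.sum_le_sum fun c _ => ?_
      by_cases hK : K v c
      · by_cases hc : c ∈ P
        · simp [hK, hc]
        · have h1 := ih c hK
          have h2 : b c < 2 := by
            by_contra h
            exact hc ((hP c).2 (Or.inr (by omega)))
          simp only [hK, hc, if_true, if_false, true_and, false_or]
          split_ifs <;> omega
      · simp [hK]
  refine ⟨P, ?_, ?_⟩
  · -- counting
    have h1 : ∑ v, g v ≤ Fintype.card V + ∑ c, if c ∉ P then g c else 0 := by
      calc ∑ v, g v = ∑ v, (1 + ∑ c, if K v c then (if c ∉ P then g c else 0) else 0) := by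
            refine Finset.sum_congr rfl fun v _ => ?_
            rw [hg v]; simp only [ite_and]
        _ = Fintype.card V + ∑ v, ∑ c, (if K v c then (if c ∉ P then g c else 0) else 0) := by
            rw [Finset.sum_add_distrib]; simp
        _ ≤ _ := Nat.add_le_add_left (sum_children_le K huniq _) _
    have h2 : ∑ v, b v ≤ ∑ c, if c ∈ P ∨ 1 ≤ b c then 1 else 0 := by
      calc ∑ v, b v = ∑ v, ∑ c, (if K v c then (if c ∈ P ∨ 1 ≤ b c then 1 else 0) else 0) := by
            refine Finset.sum_congr rfl fun v _ => ?_
            rw [hb v]; simp only [ite_and]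
        _ ≤ _ := sum_children_le K huniq _
    let H : Finset V := Finset.univ.filter fun v => t ≤ g v
    have h3 : ∑ v ∈ H, g v ≤ Fintype.card V := by
      have e : ∑ v, g v = ∑ c, (if c ∉ P then g c else 0) + ∑ c ∈ P, g c := by
        rw [← Finset.sum_filter, ← Finset.sum_filter_not_add_sum_filter _ (fun c => c ∈ P)]
        simp
      have : ∑ v ∈ H, g v ≤ ∑ c ∈ P, g c := by
        refine Finset.sum_le_sum_of_subset ?_
        intro v hv
        exact (hP v).2 (Or.inl (Finset.mem_filter.1 hv).2)
      omega
    have h4 : (H.card : ℝ) * t ≤ Fintype.card V := by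
      calc (H.card : ℝ) * t = ∑ v ∈ H, t := by simp
        _ ≤ ∑ v ∈ H, (g v : ℝ) := Finset.sum_le_sum fun v hv => (Finset.mem_filter.1 hv).2
        _ ≤ _ := by exact_mod_cast h3
    have h5 : P.card ≤ 2 * H.card := by
      have hc1 : P.card = ∑ v, if v ∈ P then 1 else 0 := by simp
      have hc2 : H.card = ∑ v, if v ∈ H then 1 else 0 := by simp
      have key : ∑ v, ((if v ∈ P ∨ 1 ≤ b v then 1 else 0) + (if v ∈ P then 1 else 0)) ≤
          ∑ v, (b v + 2 * (if v ∈ H then 1 else 0)) := by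
        refine Finset.sum_le_sum fun v _ => ?_
        have hH : v ∈ H ↔ t ≤ g v := by simp [H]
        have := hP v
        rw [← hH] at this
        by_cases a1 : v ∈ H
        · simp only [a1, this, true_or, if_true]; omega
        · by_cases a2 : 2 ≤ b v
          · simp only [a1, this, a2, or_true, true_or, if_true]; simp; omega
          · simp only [a1, this, a2, false_or, if_false]
            split_ifs <;> omega
      rw [Finset.sum_add_distrib, Finset.sum_add_distrib, ← Finset.mul_sum, ← hc1, ← hc2] at key
      omega
    have h5' : (P.card : ℝ) ≤ 2 * H.card := by exact_mod_cast h5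
    nlinarith
  · intro v hv
    have := hP v
    have hv' := mt this.2 hv
    push Not at hv'
    refine ⟨lt_of_le_of_lt ?_ hv'.1, ?_⟩
    · exact_mod_cast hD v
    · have := hN v
      omega

theorem parent_unique {V : Type*} (G : SimpleGraph V) (hG : G.IsTree) (r a b c : V)
    (ha : G.Adj a c) (hda : G.dist r c = G.dist r a + 1)
    (hb : G.Adj b c) (hdb : G.dist r c = G.dist r b + 1) : a = b := by
  obtain ⟨p, hp⟩ := hG.connected.exists_walk_length_eq_dist r a
  obtain ⟨q, hq⟩ := hG.connected.exists_walk_length_eq_dist r b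
  have h1 : (p.concat ha).IsPath :=
    SimpleGraph.Walk.isPath_of_length_eq_dist _ (by rw [SimpleGraph.Walk.length_concat]; omega)
  have h2 : (q.concat hb).IsPath :=
    SimpleGraph.Walk.isPath_of_length_eq_dist _ (by rw [SimpleGraph.Walk.length_concat]; omega)
  have h3 := (hG.existsUnique_path r c).unique h1 h2
  have := congrArg SimpleGraph.Walk.penultimate h3
  simpa using this

/-- In a tree on `n` nodes, for any real `p > 1` there is a set `P` of at most `2p`
nodes such that every connected component of `T \ P` has fewer than `n/p` nodes and
is adjacent to at most two nodes of `P`. -/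
theorem stmt5 {V : Type*} [Fintype V] (G : SimpleGraph V) (hG : G.IsTree)
    (r : V) (p : ℝ) (hp : 1 < p) :
    ∃ P : Finset V, (P.card : ℝ) ≤ 2 * p ∧
      ∀ c : (G.induce {v : V | v ∉ P}).ConnectedComponent,
        ((Set.ncard {v : {v : V | v ∉ P} |
            (G.induce {v : V | v ∉ P}).connectedComponentMk v = c} : ℝ) <
          (Fintype.card V : ℝ) / p) ∧
        Set.ncard {x : V | x ∈ P ∧ ∃ v : {v : V | v ∉ P},
            (G.induce {v : V | v ∉ P}).connectedComponentMk v = c ∧ G.Adj x ↑v} ≤ 2 := by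
  classical
  have hn : (0 : ℝ) < Fintype.card V := by exact_mod_cast Fintype.card_pos_iff.2 ⟨r⟩
  have hp0 : 0 < p := by linarith
  let K : V → V → Prop := fun a c => G.Adj a c ∧ G.dist r c = G.dist r a + 1
  have hwf : WellFounded (fun c v => K v c) := by
    let m : V → ℕ := fun v => (∑ w, G.dist r w) - G.dist r v
    refine Subrelation.wf (r := InvImage (· < ·) m) ?_ (InvImage.wf m Nat.lt_wfRel.wf)
    intro c v h
    have h1 := h.2
    have h2 : G.dist r c ≤ ∑ w, G.dist r w :=
      Finset.single_le_sum (f := fun w => G.dist r w) (fun _ _ => Nat.zero_le _) (Finset.mem_univ c)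
    simp only [InvImage, m]
    omega
  have huniq : ∀ a b c, K a c → K b c → a = b := fun a b c h1 h2 =>
    parent_unique G hG r a b c h1.1 h1.2 h2.1 h2.2
  have hadj : ∀ a b, G.Adj a b → K a b ∨ K b a := by
    intro a b h
    rcases hG.dist_eq_dist_add_one_of_adj r h with h' | h'
    · exact Or.inr ⟨h.symm, h'⟩
    · exact Or.inl ⟨h, h'⟩
  obtain ⟨P, hcard, hP⟩ := core K hwf huniq (Fintype.card V / p) (by positivity)
  refine ⟨P, ?_, ?_⟩
  · rw [mul_div_assoc', div_le_iff₀ hp0] at hcard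
    nlinarith
  intro c
  -- top vertex of the component
  obtain ⟨v, hvc, hmin⟩ : ∃ v : {v : V | v ∉ P},
      (G.induce {v : V | v ∉ P}).connectedComponentMk v = c ∧
      ∀ w : {v : V | v ∉ P}, (G.induce {v : V | v ∉ P}).connectedComponentMk w = c →
        G.dist r v ≤ G.dist r w := by
    have hne : {v : {v : V | v ∉ P} |
        (G.induce {v : V | v ∉ P}).connectedComponentMk v = c}.Nonempty := c.exists_rep
    obtain ⟨v, hv, hm⟩ := Set.exists_min_image _ (fun v : {v : V | v ∉ P} => G.dist r v)
      (Set.toFinite _) hne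
    exact ⟨v, hv, hm⟩
  obtain ⟨hDv, hNv⟩ := hP v v.2
  set D : Set V := {u | Relation.ReflTransGen (fun a c => K a c ∧ c ∉ P) v u} with hDdef
  have hDP : ∀ u ∈ D, u ∉ P := by
    intro u hu
    rcases Relation.ReflTransGen.cases_tail hu with h | ⟨w, _, h⟩
    · rw [h]; exact v.2
    · exact h.2
  have hup : ∀ u ∈ D, u = v ∨ ∀ x, K x u → x ∈ D := by
    intro u hu
    rcases Relation.ReflTransGen.cases_tail hu with h | ⟨w, hw, h⟩
    · exact Or.inl h
    · right
      intro x hx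
      rw [huniq _ _ _ hx h.1]
      exact hw
  have hcomp : ∀ w : {v : V | v ∉ P},
      (G.induce {v : V | v ∉ P}).connectedComponentMk w = c → (w : V) ∈ D := by
    intro w hw
    have hreach : (G.induce {v : V | v ∉ P}).Reachable v w :=
      SimpleGraph.ConnectedComponent.exact (hvc.trans hw.symm)
    rw [SimpleGraph.reachable_iff_reflTransGen] at hreach
    clear hw
    induction hreach with
    | refl => exact Relation.ReflTransGen.refl
    | @tail y z hy hyz ih =>
      have hyz' : G.Adj y z := hyz
      rcases hadj _ _ hyz' with h | h
      · exact Relation.ReflTransGen.tail ih ⟨h, z.2⟩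
      · rcases hup _ ih with h' | h'
        · exfalso
          have hz : (G.induce {v : V | v ∉ P}).connectedComponentMk z = c := by
            rw [← hvc]
            apply SimpleGraph.ConnectedComponent.sound
            apply SimpleGraph.Reachable.symm
            rw [SimpleGraph.reachable_iff_reflTransGen]
            exact hy.tail hyz
          have h1 := hmin z hz
          have h2 := h.2
          rw [h'] at h2
          omega
        · exact h' _ h
  constructor
  · refine lt_of_le_of_lt ?_ hDv
    norm_cast
    rw [← Set.ncard_image_of_injective _ Subtype.val_injective]
    refine Set.ncard_le_ncard ?_ (Set.toFinite _)
    rintro _ ⟨w, hw, rfl⟩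
    exact hcomp w hw
  · have hsub : {x : V | x ∈ P ∧ ∃ v : {v : V | v ∉ P},
            (G.induce {v : V | v ∉ P}).connectedComponentMk v = c ∧ G.Adj x ↑v} ⊆
        {x | x ∈ P ∧ ∃ u,
          Relation.ReflTransGen (fun a c => K a c ∧ c ∉ P) v u ∧ K u x} ∪ {x | K x v} := by
      rintro x ⟨hxP, w, hw, hxw⟩
      have hwD := hcomp w hw
      rcases hadj _ _ hxw with h | h
      · right
        rcases hup _ hwD with h' | h'
        · rw [h'] at h; exact h
        · exact absurd hxP (hDP _ (h' _ h))
      · left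
        exact ⟨hxP, w, hwD, h⟩
    refine (Set.ncard_le_ncard hsub (Set.toFinite _)).trans ?_
    refine (Set.ncard_union_le _ _).trans ?_
    have : Set.ncard {x | K x v} ≤ 1 := by
      rw [Set.ncard_le_one (Set.toFinite _)]
      intro a ha b hb
      exact huniq _ _ _ ha hb
    omega
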